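/- Let G be a finite abelian group of order n and let A = (A_1,...,A_t) be a sequence of finite nonempty subsets of G with t ≥ n. If the stabilizer of Σ_n(A) is trivial, Σ_n(A) is nonempty, and each element of G lies in at most n of the sets A_i, then n − 1 ≥ |Σ_n(A)| ≥ 1 − n + Σ_{i=1}^t |A_i| is impossible unless Σ_{i=1}^t |A_i| ≤ 2n − 2; in particular |Σ_n(A)| ≥ 1 − n + Σ_{i=1}^t |A_i|. -/

import Mathlib

/-!
The theorem is proved for a subgroup `H` and the sums of terms `y r`, `r ∈ R`, taken from distinct
sets of the family with each `y r` in a prescribed coset `p r + H`. If `D` is the set of these sums,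
`M` its stabilizer, `l = #R` and
`Φ L = (l - 1) |L| - ∑ g, min l (number of sets of the family that meet g + L)`,
the claim is `|H| + Φ H ≤ |D| + Φ M`. For `H = G` this is the Devos–Goddyn–Mohar theorem, since then
`Φ H = -|G|`.

The proof is by induction on `H`, and then on the family with `∑ |A k| ^ 2` increasing; one may
assume that every `A k` is a union of cosets of `M`. If some sums use sets that contain all the
unused ones, Kneser's theorem gives the bound for a subset `C` of `D` with its own stabilizer `L` in
place of `M`. Otherwise an unused set `A j` and a used set `A i` are incomparable. Replacing them by
`A i ∪ A j` and `A i ∩ A j` increases `∑ |A k| ^ 2`, enlarges neither `D` nor the sum in `Φ`, and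
again yields the bound for a subset `C` of `D`.

While `L` does not stabilize `D`, some coset of `L` meets `D` without being contained in it. The
induction hypothesis for `L` bounds from below the part of `D` in this coset, which is disjoint
from `C`. Adding it to `C` shrinks the stabilizer, so that eventually `L ≤ M`.
-/

namespace DevosGoddynMohar

open Finset AddAction
open scoped Classical Pointwise

section Kneser

variable {G : Type*} [AddCommGroup G]

lemma card_mul_card_le_of_add_mem {K₁ K₂ : AddSubgroup G} [Finite ↥(K₁ ⊓ K₂)] (c : G)
    (V : Finset K₁) (U : Finset K₂) (S : Finset G) (hS : ∀ x ∈ V, ∀ y ∈ U, c + x + y ∈ S) :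
    #V * #U ≤ #S * Nat.card ↥(K₁ ⊓ K₂) := by
  rw [← card_product, mul_comm #S]
  refine card_le_mul_card_image_of_maps_to (f := fun q : K₁ × K₂ ↦ c + q.1 + q.2)
    (fun q hq ↦ hS _ (mem_product.1 hq).1 _ (mem_product.1 hq).2) _ fun b _ ↦ ?_
  set F := (V ×ˢ U).filter fun q ↦ c + q.1 + q.2 = b
  obtain hempty | ⟨q₀, h₀⟩ := F.eq_empty_or_nonempty
  · simp [hempty]
  have hfiber {q q' : K₁ × K₂} (hq : q ∈ F) (hq' : q' ∈ F) :
      (q.1 - q'.1 : G) = q'.2 - q.2 := by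
    have h := (mem_filter.1 hq).2.trans (mem_filter.1 hq').2.symm
    rw [add_assoc, add_assoc, add_right_inj] at h
    exact sub_eq_sub_iff_add_eq_add.2 (by rw [h, add_comm])
  rw [← Set.ncard_coe_finset]
  refine Set.ncard_le_ncard_of_injOn (fun q : K₁ × K₂ ↦ (q.1 - q₀.1 : G))
    (t := ((K₁ ⊓ K₂ : AddSubgroup G) : Set G))
    (fun q hq ↦ AddSubgroup.mem_inf.2 ⟨(q.1 - q₀.1).2, ?_⟩) (fun q hq q' hq' h ↦ ?_)
    (Set.toFinite _)
  · rw [hfiber hq h₀]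
    exact (q₀.2 - q.2).2
  · have h₁ : (q.1 : G) = q'.1 := sub_left_injective h
    have h₂ := hfiber hq hq'
    rw [h₁, sub_self, eq_comm, sub_eq_zero] at h₂
    exact Prod.ext (Subtype.ext h₁) (Subtype.ext h₂.symm)

private lemma add_le_of_grid_bounds {h u u' v v' d e : ℕ} (hu : h ≤ u) (hv' : h ≤ v')
    (hv : v = 0 ∨ h ≤ v) (hd : d + h < u + u') (he : e + h < v + v') (hh : 0 < h)
    (hvu : v' * u ≤ d * h) (huv : v * u' ≤ e * h) : v + v' ≤ d := by
  obtain rfl | hv := hv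
  · rw [zero_add]
    exact le_of_mul_le_mul_right ((Nat.mul_le_mul_left v' hu).trans hvu) hh
  have hlt : v' < u' := by
    zify at *
    nlinarith [mul_nonneg (sub_nonneg.2 hv') (sub_nonneg.2 hu)]
  zify at *
  nlinarith [mul_nonneg (sub_nonneg.2 (hv'.trans hlt.le)) (sub_nonneg.2 hv)]

variable {C₁ C₂ : Finset G}

lemma natCard_le_card_of_add_mem {L K : AddSubgroup G} (hLK : L ≤ K) {S : Finset K}
    (hS : S.Nonempty) (hadd : ∀ x : L, ∀ s ∈ S, s + AddSubgroup.inclusion hLK x ∈ S) :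
    Nat.card L ≤ #S := by
  obtain ⟨s, hs⟩ := hS
  rw [← Nat.card_eq_finsetCard]
  refine Nat.card_le_card_of_injective (fun x ↦ ⟨_, hadd x s hs⟩) fun x y hxy ↦ ?_
  exact AddSubgroup.inclusion_injective hLK (add_right_injective s (Subtype.mk.inj hxy))

lemma add_mem_iff_of_mem_stabilizer {C : Finset G} {x : G} (hx : x ∈ stabilizer G C) (z : G) :
    z + x ∈ C ↔ z ∈ C := by
  simpa [add_comm] using mem_stabilizer_finset.1 hx z

lemma card_filter_mul_card_filter_le [Fintype (stabilizer G C₁)] [Fintype (stabilizer G C₂)]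
    (c : G) :
    #{x : stabilizer G C₁ | c + x ∉ C₂} * #{y : stabilizer G C₂ | c + y ∈ C₁} ≤
      #(C₁ \ C₂) * Nat.card ↥(stabilizer G C₁ ⊓ stabilizer G C₂) := by
  have : Finite ↥(stabilizer G C₁ ⊓ stabilizer G C₂) :=
    Set.Finite.subset (Set.toFinite (stabilizer G C₁ : Set G)) inf_le_left
  refine card_mul_card_le_of_add_mem c _ _ _ fun x hx y hy ↦ ?_
  rw [mem_filter_univ] at hx hy
  rw [mem_sdiff, add_mem_iff_of_mem_stabilizer y.2, add_right_comm,
    add_mem_iff_of_mem_stabilizer x.2]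
  exact ⟨hy, hx⟩

lemma card_stabilizer_le_card_sdiff [Finite (stabilizer G C₁)] [Finite (stabilizer G C₂)]
    {c : G} (hc : c ∈ C₁ \ C₂)
    (h₁ : #(C₁ \ C₂) + Nat.card ↥(stabilizer G C₁ ⊓ stabilizer G C₂) < Nat.card (stabilizer G C₂))
    (h₂ : #(C₂ \ C₁) + Nat.card ↥(stabilizer G C₁ ⊓ stabilizer G C₂) < Nat.card (stabilizer G C₁)) :
    Nat.card (stabilizer G C₁) ≤ #(C₁ \ C₂) := by
  cases nonempty_fintype (stabilizer G C₁)
  cases nonempty_fintype (stabilizer G C₂)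
  set I := stabilizer G C₁ ⊓ stabilizer G C₂ with hI
  have : Finite I := Set.Finite.subset (Set.toFinite (stabilizer G C₁ : Set G)) inf_le_left
  obtain ⟨hc₁, hc₂⟩ := mem_sdiff.1 hc
  let V : Finset (stabilizer G C₁) := univ.filter fun x ↦ c + x ∈ C₂
  let U : Finset (stabilizer G C₂) := univ.filter fun y ↦ c + y ∈ C₁
  have hV : #V + #Vᶜ = Nat.card (stabilizer G C₁) := by
    rw [card_add_card_compl, Nat.card_eq_fintype_card]
  have hU : #U + #Uᶜ = Nat.card (stabilizer G C₂) := by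
    rw [card_add_card_compl, Nat.card_eq_fintype_card]
  have hVU : #Vᶜ * #U ≤ #(C₁ \ C₂) * Nat.card I := by
    simpa only [V, U, compl_filter] using card_filter_mul_card_filter_le (C₁ := C₁) c
  have hUV : #V * #Uᶜ ≤ #(C₂ \ C₁) * Nat.card I := by
    rw [mul_comm, hI, inf_comm]
    simpa only [V, U, compl_filter] using card_filter_mul_card_filter_le (C₁ := C₂) c
  have hIU : Nat.card I ≤ #U :=
    natCard_le_card_of_add_mem inf_le_right ⟨0, by simpa [U] using hc₁⟩ fun x s hs ↦ by
      simpa [U, ← add_assoc, add_mem_iff_of_mem_stabilizer x.2.1] using hs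
  have hIV' : Nat.card I ≤ #Vᶜ :=
    natCard_le_card_of_add_mem inf_le_left ⟨0, by simpa [V] using hc₂⟩ fun x s hs ↦ by
      simpa [V, ← add_assoc, add_mem_iff_of_mem_stabilizer x.2.2] using hs
  have hIV : #V = 0 ∨ Nat.card I ≤ #V := by
    rw [card_eq_zero]
    refine V.eq_empty_or_nonempty.imp_right fun hne ↦ ?_
    exact natCard_le_card_of_add_mem inf_le_left hne fun x s hs ↦ by
      simpa [V, ← add_assoc, add_mem_iff_of_mem_stabilizer x.2.2] using hs
  rw [← hV]
  exact add_le_of_grid_bounds hIU hIV' hIV (hU ▸ h₁) (hV ▸ h₂) Nat.card_pos hVU hUV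

lemma finite_stabilizer {C : Finset G} (hC : C.Nonempty) : Finite (stabilizer G C) := by
  rw [← stabilizer_coe_finset]
  exact stabilizer_finite (coe_nonempty.2 hC) C.finite_toSet

lemma stabilizer_inf_stabilizer_le (C₁ C₂ : Finset G) :
    stabilizer G C₁ ⊓ stabilizer G C₂ ≤ stabilizer G (C₁ ∪ C₂) := by
  simpa only [← stabilizer_coe_finset, coe_union] using
    stabilizer_inf_stabilizer_le_stabilizer_union

theorem min_card_add_card_stabilizer_le_union (C₁ C₂ : Finset G) :
    min (#C₁ + Nat.card (stabilizer G C₁)) (#C₂ + Nat.card (stabilizer G C₂)) ≤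
      #(C₁ ∪ C₂) + Nat.card (stabilizer G (C₁ ∪ C₂)) := by
  by_cases hsub₁ : C₁ ⊆ C₂
  · rw [union_eq_right.2 hsub₁]
    exact min_le_right _ _
  by_cases hsub₂ : C₂ ⊆ C₁
  · rw [union_eq_left.2 hsub₂]
    exact min_le_left _ _
  obtain ⟨c, hc₁, hc₂⟩ := not_subset.1 hsub₁
  obtain ⟨d, hd₂, hd₁⟩ := not_subset.1 hsub₂
  have := finite_stabilizer ⟨c, hc₁⟩
  have := finite_stabilizer ⟨d, hd₂⟩
  have := finite_stabilizer (C := C₁ ∪ C₂) ⟨c, mem_union_left _ hc₁⟩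
  have hinf := AddSubgroup.card_le_of_le (stabilizer_inf_stabilizer_le C₁ C₂)
  have hcard₁ := card_sdiff_add_card C₁ C₂
  have hcard₂ := card_sdiff_add_card C₂ C₁
  rw [union_comm] at hcard₂
  by_contra! hlt
  rw [lt_min_iff] at hlt
  have h₁ := card_stabilizer_le_card_sdiff (mem_sdiff.2 ⟨hc₁, hc₂⟩) (by omega) (by omega)
  have h₂ := card_stabilizer_le_card_sdiff (mem_sdiff.2 ⟨hd₂, hd₁⟩) (by rw [inf_comm]; omega)
    (by rw [inf_comm]; omega)
  omega

lemma exists_between_add_card_stabilizer {A B : Finset G} (hA : A.Nonempty) (hB : 0 ∈ B) :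
    ∃ C, A ⊆ C ∧ C ⊆ A + B ∧ #A + #B ≤ #C + Nat.card (stabilizer G C) := by
  induction hk : #B using Nat.strong_induction_on generalizing A B with | _ k ih
  subst hk
  by_cases hclosed : A + B ⊆ A
  · refine ⟨A, Subset.rfl, subset_add_left A hB, ?_⟩
    have := finite_stabilizer hA
    have hBs : (B : Set G) ⊆ stabilizer G A := fun b hb ↦
      mem_stabilizer_finset'.2 fun a ha ↦ by
        rw [vadd_eq_add, add_comm]
        exact hclosed (add_mem_add ha hb)
    have := Set.ncard_le_ncard hBs (Set.toFinite _)
    rw [Set.ncard_coe_finset] at this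
    exact Nat.add_le_add_left this _
  obtain ⟨z, hz, hzA⟩ := not_subset.1 hclosed
  obtain ⟨e, he, b, hb, rfl⟩ := mem_add.1 hz
  let x := addDysonETransform e (A, B)
  have hcard : #x.1 + #x.2 = #A + #B := addDysonETransform.card e (A, B)
  have hsub : x.1 + x.2 ⊆ A + B := addDysonETransform.subset e (A, B)
  have hlt : #x.2 < #B := by
    refine card_lt_card (ssubset_iff_of_subset inter_subset_left |>.2 ⟨b, hb, fun hbx ↦ hzA ?_⟩)
    exact mem_neg_vadd_finset_iff.1 (mem_inter.1 hbx).2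
  have h0 : 0 ∈ x.2 := by simpa [x, addDysonETransform, hB, mem_neg_vadd_finset_iff] using he
  obtain ⟨C, hxC, hC, hle⟩ := ih _ hlt (hA.mono subset_union_left) h0 rfl
  exact ⟨C, subset_union_left.trans hxC, hC.trans hsub, hcard ▸ hle⟩

theorem card_add_card_le_card_add_add_card_stabilizer {A B : Finset G} (hA : A.Nonempty)
    (hB : B.Nonempty) : #A + #B ≤ #(A + B) + Nat.card (stabilizer G (A + B)) := by
  have hexists (b : G) (hb : b ∈ B) :
      ∃ C, b +ᵥ A ⊆ C ∧ C ⊆ A + B ∧ #A + #B ≤ #C + Nat.card (stabilizer G C) := by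
    obtain ⟨C, hAC, hCA, hC⟩ := exists_between_add_card_stabilizer (B := -b +ᵥ B)
      (hA.vadd_finset (a := b)) (mem_neg_vadd_finset_iff.2 (by simpa using hb))
    refine ⟨C, hAC, ?_, by simpa using hC⟩
    simpa [vadd_add_assoc, add_vadd_comm] using hCA
  choose! C hAC hCA hC using hexists
  have hunion (S : Finset G) (hS : S.Nonempty) (hSB : S ⊆ B) :
      #A + #B ≤ #(S.sup C) + Nat.card (stabilizer G (S.sup C)) := by
    induction hS using Finset.Nonempty.cons_induction with
    | singleton b => simpa using hC b (hSB (mem_singleton_self b))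
    | cons b S hb _ ih =>
      rw [cons_eq_insert, insert_subset_iff] at hSB
      rw [sup_cons]
      exact (le_min (hC b hSB.1) (ih hSB.2)).trans (min_card_add_card_stabilizer_le_union _ _)
  have hsup : B.sup C = A + B := by
    refine subset_antisymm (Finset.sup_le hCA) ?_
    rintro z hz
    obtain ⟨a, ha, b, hb, rfl⟩ := mem_add.1 hz
    exact mem_sup.2 ⟨b, hb, hAC b hb (mem_vadd_finset.2 ⟨a, ha, add_comm _ _⟩)⟩
  exact hsup ▸ hunion B hB Subset.rfl

end Kneser

section Stabilizer

variable {G : Type*} [AddCommGroup G] {L : AddSubgroup G} {C : Finset G}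

lemma mem_iff_mem_of_le_stabilizer (h : L ≤ stabilizer G C) {g a : G} (hga : g - a ∈ L) :
    g ∈ C ↔ a ∈ C := by
  simpa using mem_stabilizer_finset.1 (h hga) a

lemma le_stabilizer_add (h : L ≤ stabilizer G C) (D : Finset G) : L ≤ stabilizer G (C + D) := by
  refine fun x hx ↦ mem_stabilizer_finset'.2 fun g hg ↦ ?_
  obtain ⟨c, hc, d, hd, rfl⟩ := mem_add.1 hg
  rw [vadd_eq_add, ← add_assoc]
  exact add_mem_add (mem_stabilizer_finset'.1 (h hx) hc) hd

lemma natCard_le_card_of_le_stabilizer (hC : C.Nonempty) (h : L ≤ stabilizer G C) :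
    Nat.card L ≤ #C := by
  obtain ⟨c, hc⟩ := hC
  rw [← Nat.card_eq_finsetCard]
  refine Nat.card_le_card_of_injective
    (fun x : L ↦ ⟨x + c, mem_stabilizer_finset'.1 (h x.2) hc⟩) fun x y hxy ↦ ?_
  exact Subtype.ext (add_left_injective c (Subtype.mk.inj hxy))

end Stabilizer

section CosetHull

variable {G : Type*} [AddCommGroup G] [Fintype G] {L N : AddSubgroup G} {A B C D : Finset G} {g : G}

/-- The union `C + L` of the cosets of `L` that meet `C`. In particular `cosetHull L {a}` is the
coset `a + L`. -/
noncomputable def cosetHull (L : AddSubgroup G) (C : Finset G) : Finset G :=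
  {g | ∃ c ∈ C, g - c ∈ L}

lemma mem_cosetHull : g ∈ cosetHull L C ↔ ∃ c ∈ C, g - c ∈ L := by simp [cosetHull]

lemma mem_cosetHull_singleton {a : G} : g ∈ cosetHull L {a} ↔ g - a ∈ L := by simp [cosetHull]

lemma subset_cosetHull (L : AddSubgroup G) (C : Finset G) : C ⊆ cosetHull L C :=
  fun g hg ↦ mem_cosetHull.2 ⟨g, hg, by simp⟩

lemma cosetHull_nonempty (L : AddSubgroup G) (hC : C.Nonempty) : (cosetHull L C).Nonempty :=
  hC.mono (subset_cosetHull L C)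

lemma cosetHull_subset_cosetHull (hLN : L ≤ N) (hCD : C ⊆ D) : cosetHull L C ⊆ cosetHull N D := by
  intro g hg
  obtain ⟨c, hc, hgc⟩ := mem_cosetHull.1 hg
  exact mem_cosetHull.2 ⟨c, hCD hc, hLN hgc⟩

lemma le_stabilizer_cosetHull (L : AddSubgroup G) (C : Finset G) :
    L ≤ stabilizer G (cosetHull L C) := by
  refine fun x hx ↦ mem_stabilizer_finset'.2 fun g hg ↦ ?_
  obtain ⟨c, hc, hgc⟩ := mem_cosetHull.1 hg
  exact mem_cosetHull.2 ⟨c, hc, by simpa [add_sub_assoc] using L.add_mem hx hgc⟩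

lemma cosetHull_subset_of_le_stabilizer (h : L ≤ stabilizer G D) (hCD : C ⊆ D) :
    cosetHull L C ⊆ D := by
  intro g hg
  obtain ⟨c, hc, hgc⟩ := mem_cosetHull.1 hg
  exact (mem_iff_mem_of_le_stabilizer h hgc).2 (hCD hc)

lemma cosetHull_eq_self (h : L ≤ stabilizer G C) : cosetHull L C = C :=
  (cosetHull_subset_of_le_stabilizer h Subset.rfl).antisymm (subset_cosetHull L C)

lemma cosetHull_cosetHull (h : N ≤ L) (C : Finset G) :
    cosetHull L (cosetHull N C) = cosetHull L C :=
  (cosetHull_subset_of_le_stabilizer (le_stabilizer_cosetHull L C)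
    (cosetHull_subset_cosetHull h Subset.rfl)).antisymm
    (cosetHull_subset_cosetHull le_rfl (subset_cosetHull N C))

lemma cosetHull_inter (h : N ≤ stabilizer G D) (C : Finset G) :
    cosetHull N (C ∩ D) = cosetHull N C ∩ D := by
  ext g
  simp only [mem_inter, mem_cosetHull, and_assoc, ← exists_and_right]
  refine exists_congr fun c ↦ and_congr_right fun _ ↦ ?_
  rw [and_comm, and_congr_right_iff]
  exact fun hgc ↦ (mem_iff_mem_of_le_stabilizer h hgc).symm

lemma card_cosetHull_singleton (L : AddSubgroup G) (a : G) :
    #(cosetHull L {a}) = Nat.card L := by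
  rw [← Nat.card_eq_finsetCard]
  exact Nat.card_congr ((Equiv.subRight a).subtypeEquiv fun g ↦ mem_cosetHull_singleton)

lemma cosetHull_union (L : AddSubgroup G) (C D : Finset G) :
    cosetHull L (C ∪ D) = cosetHull L C ∪ cosetHull L D := by
  ext g
  simp only [mem_cosetHull, mem_union, or_and_right, exists_or]

lemma cosetHull_add (L : AddSubgroup G) (A B : Finset G) :
    cosetHull L (A + B) = cosetHull L A + cosetHull L B := by
  ext g
  simp only [mem_cosetHull, mem_add]
  constructor
  · rintro ⟨_, ⟨a, ha, b, hb, rfl⟩, h⟩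
    exact ⟨g - b, ⟨a, ha, by rwa [sub_sub, add_comm]⟩, b, ⟨b, hb, by simp⟩, sub_add_cancel g b⟩
  · rintro ⟨u, ⟨a, ha, hua⟩, v, ⟨b, hb, hvb⟩, rfl⟩
    exact ⟨a + b, ⟨a, ha, b, hb, rfl⟩, by simpa [add_sub_add_comm] using L.add_mem hua hvb⟩

theorem card_cosetHull_add_card_cosetHull_le (hA : A.Nonempty) (hB : B.Nonempty)
    (hN : stabilizer G (cosetHull N (A + B)) ≤ N) :
    #(cosetHull N A) + #(cosetHull N B) ≤ #(cosetHull N (A + B)) + Nat.card N := by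
  have h := card_add_card_le_card_add_add_card_stabilizer (cosetHull_nonempty N hA)
    (cosetHull_nonempty N hB)
  rw [← cosetHull_add] at h
  exact h.trans (Nat.add_le_add_left (AddSubgroup.card_le_of_le hN) _)

theorem sum_card_cosetHull_add_card_le {ρ : Type*} {W : ρ → Finset G} {R : Finset ρ}
    (hW : ∀ r ∈ R, (W r).Nonempty) (hN : stabilizer G (cosetHull N (∑ r ∈ R, W r)) ≤ N) :
    ∑ r ∈ R, #(cosetHull N (W r)) + Nat.card N ≤
      #(cosetHull N (∑ r ∈ R, W r)) + #R * Nat.card N := by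
  induction R using Finset.cons_induction with
  | empty => simp [← singleton_zero, card_cosetHull_singleton]
  | cons a R ha ih =>
    simp only [mem_cons, forall_eq_or_imp] at hW
    have hsum : (∑ r ∈ R, W r).Nonempty :=
      Finset.sum_induction W Finset.Nonempty (fun _ _ h h' ↦ h.add h') zero_nonempty hW.2
    rw [sum_cons] at hN
    have hadd := card_cosetHull_add_card_cosetHull_le hW.1 hsum hN
    have hrec := ih hW.2 (by
      refine (le_stabilizer_add le_rfl (cosetHull N (W a))).trans ?_
      rwa [add_comm, ← cosetHull_add])
    rw [sum_cons, sum_cons, card_cons, add_mul]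
    omega

end CosetHull

section PatternSums

variable {G : Type*} [AddCommGroup G] {ι ρ : Type*} {A B : ι → Finset G} {R S : Finset ρ}
  {p y z : ρ → G} {σ τ : ρ → ι} {H L N : AddSubgroup G}

/-- The elements `y r`, for `r ∈ R`, are taken from the sets `A (σ r)` with distinct indices, and
`y r` lies in the coset `p r + H`. -/
structure IsRep (A : ι → Finset G) (R : Finset ρ) (p : ρ → G) (H : AddSubgroup G)
    (σ : ρ → ι) (y : ρ → G) : Prop where
  injOn : Set.InjOn σ R
  mem : ∀ r ∈ R, y r ∈ A (σ r)
  sub_mem : ∀ r ∈ R, y r - p r ∈ H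

namespace IsRep

lemma mono (h : IsRep A R p H σ y) (hSR : S ⊆ R) : IsRep A S p H σ y :=
  ⟨h.injOn.mono hSR, fun r hr ↦ h.mem r (hSR hr), fun r hr ↦ h.sub_mem r (hSR hr)⟩

lemma refl (h : IsRep A R p H σ y) (L : AddSubgroup G) : IsRep A R y L σ y :=
  ⟨h.injOn, h.mem, by simp⟩

lemma trans (hLH : L ≤ H) (hy : ∀ r ∈ R, y r - p r ∈ H) (h : IsRep A R y L τ z) :
    IsRep A R p H τ z :=
  ⟨h.injOn, h.mem, fun r hr ↦ by
    simpa using H.add_mem (hLH (h.sub_mem r hr)) (hy r hr)⟩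

lemma sum_sub_sum_mem (h : IsRep A R p H σ y) : ∑ r ∈ R, y r - ∑ r ∈ R, p r ∈ H := by
  rw [← sum_sub_distrib]
  exact H.sum_mem h.sub_mem

lemma insert (h : IsRep A R p H σ y) {r₀ : ρ} (hr₀ : r₀ ∉ R) {k : ι}
    (hk : ∀ r ∈ R, σ r ≠ k) {a : G} (ha : a ∈ A k) (hap : a - p r₀ ∈ H) :
    IsRep A (insert r₀ R) p H (Function.update σ r₀ k) (Function.update y r₀ a) := by
  have hne {r} (hr : r ∈ R) : r ≠ r₀ := ne_of_mem_of_not_mem hr hr₀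
  refine ⟨?_, ?_, ?_⟩
  · rw [coe_insert, Set.injOn_insert (mod_cast hr₀)]
    have heq : Set.EqOn σ (Function.update σ r₀ k) R := fun r hr ↦
      (Function.update_of_ne (hne hr) _ _).symm
    refine ⟨h.injOn.congr heq, ?_⟩
    rintro ⟨r, hr, hrk⟩
    rw [← heq hr, Function.update_self] at hrk
    exact hk r hr hrk
  · simp only [mem_insert, forall_eq_or_imp, Function.update_self]
    refine ⟨ha, fun r hr ↦ ?_⟩
    simpa only [Function.update_of_ne (hne hr)] using h.mem r hr
  · simp only [mem_insert, forall_eq_or_imp, Function.update_self]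
    refine ⟨hap, fun r hr ↦ ?_⟩
    simpa only [Function.update_of_ne (hne hr)] using h.sub_mem r hr

end IsRep

lemma sum_insert_update {r₀ : ρ} (hr₀ : r₀ ∉ R) (y : ρ → G) (a : G) :
    ∑ r ∈ insert r₀ R, Function.update y r₀ a r = a + ∑ r ∈ R, y r := by
  rw [sum_insert hr₀, Function.update_self, sum_update_of_notMem hr₀]

variable [Fintype G]

/-- The sums of representations of the pattern `p` modulo `H` by the family `A`. -/
noncomputable def patternSums (A : ι → Finset G) (R : Finset ρ) (p : ρ → G) (H : AddSubgroup G) :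
    Finset G :=
  {g | ∃ σ y, IsRep A R p H σ y ∧ ∑ r ∈ R, y r = g}

lemma mem_patternSums {g : G} :
    g ∈ patternSums A R p H ↔ ∃ σ y, IsRep A R p H σ y ∧ ∑ r ∈ R, y r = g := by
  simp [patternSums]

lemma IsRep.sum_mem_patternSums (h : IsRep A R p H σ y) : ∑ r ∈ R, y r ∈ patternSums A R p H :=
  mem_patternSums.2 ⟨σ, y, h, rfl⟩

lemma patternSums_subset_cosetHull : patternSums A R p H ⊆ cosetHull H {∑ r ∈ R, p r} := by
  intro g hg
  obtain ⟨σ, y, h, rfl⟩ := mem_patternSums.1 hg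
  exact mem_cosetHull_singleton.2 h.sum_sub_sum_mem

lemma patternSums_subset_patternSums (hLH : L ≤ H) (hy : ∀ r ∈ R, y r - p r ∈ H) :
    patternSums A R y L ⊆ patternSums A R p H := by
  intro g hg
  obtain ⟨τ, z, h, rfl⟩ := mem_patternSums.1 hg
  exact (h.trans hLH hy).sum_mem_patternSums

lemma patternSums_mono (hAB : ∀ i, A i ⊆ B i) : patternSums A R p H ⊆ patternSums B R p H := by
  intro g hg
  obtain ⟨σ, y, h, rfl⟩ := mem_patternSums.1 hg
  exact IsRep.sum_mem_patternSums ⟨h.injOn, fun r hr ↦ hAB _ (h.mem r hr), h.sub_mem⟩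

lemma le_stabilizer_patternSums (hR : R.Nonempty) (hNH : N ≤ H)
    (hA : ∀ i, N ≤ stabilizer G (A i)) : N ≤ stabilizer G (patternSums A R p H) := by
  obtain ⟨r₀, hr₀⟩ := hR
  refine fun x hx ↦ mem_stabilizer_finset'.2 fun g hg ↦ ?_
  obtain ⟨σ, y, h, rfl⟩ := mem_patternSums.1 hg
  have hrep := (h.mono (erase_subset r₀ R)).insert (notMem_erase r₀ R)
    (fun r hr hrr₀ ↦ (mem_erase.1 hr).1 (h.injOn (mem_of_mem_erase hr) hr₀ hrr₀))
    (mem_stabilizer_finset'.1 (hA _ hx) (h.mem r₀ hr₀))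
    (by simpa [add_sub_assoc] using H.add_mem (hNH hx) (h.sub_mem r₀ hr₀))
  have hmem := hrep.sum_mem_patternSums
  rwa [sum_insert_update (notMem_erase r₀ R), insert_erase hr₀, vadd_eq_add, add_assoc,
    add_sum_erase R y hr₀] at hmem

lemma patternSums_cosetHull (hR : R.Nonempty) (hNH : N ≤ H) :
    patternSums (fun i ↦ cosetHull N (A i)) R p H = cosetHull N (patternSums A R p H) := by
  refine Subset.antisymm ?_ (cosetHull_subset_of_le_stabilizer
    (le_stabilizer_patternSums hR hNH fun i ↦ le_stabilizer_cosetHull N (A i))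
    (patternSums_mono fun i ↦ subset_cosetHull N (A i)))
  intro g hg
  obtain ⟨σ, y, h, rfl⟩ := mem_patternSums.1 hg
  have hexists (r : ρ) (hr : r ∈ R) : ∃ z ∈ A (σ r), y r - z ∈ N := mem_cosetHull.1 (h.mem r hr)
  choose! z hz hyz using hexists
  have hrep : IsRep A R p H σ z :=
    ⟨h.injOn, hz, fun r hr ↦ by simpa using H.sub_mem (h.sub_mem r hr) (hNH (hyz r hr))⟩
  refine mem_cosetHull.2 ⟨_, hrep.sum_mem_patternSums, ?_⟩
  rw [← sum_sub_distrib]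
  exact N.sum_mem hyz

end PatternSums

section Potential

variable {G : Type*} [AddCommGroup G] [Fintype G] {ι : Type*} [Fintype ι] {A B : ι → Finset G}
  {L N : AddSubgroup G} {g : G}

/-- The number of sets of the family `A` that meet the coset `g + L`. -/
noncomputable def hitCount (A : ι → Finset G) (L : AddSubgroup G) (g : G) : ℕ :=
  #{i | g ∈ cosetHull L (A i)}

lemma hitCount_mono (hLN : L ≤ N) (hAB : ∀ i, A i ⊆ B i) (g : G) :
    hitCount A L g ≤ hitCount B N g :=
  card_le_card (monotone_filter_right _ fun i _ hi ↦ cosetHull_subset_cosetHull hLN (hAB i) hi)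

lemma hitCount_cosetHull (hNL : N ≤ L) (g : G) :
    hitCount (fun i ↦ cosetHull N (A i)) L g = hitCount A L g := by
  simp only [hitCount, cosetHull_cosetHull hNL]

lemma hitCount_of_le_stabilizer (hA : ∀ i, N ≤ stabilizer G (A i)) (hLN : L ≤ N) :
    hitCount A L g = hitCount A N g := by
  simp only [hitCount, cosetHull_eq_self (hA _), cosetHull_eq_self (hLN.trans (hA _))]

/-- The quantity `(l - 1) |L| - ∑ g, min l (hitCount A L g)`. The Devos–Goddyn–Mohar bound says that
`|H|` plus the potential of `H` is at most the number of sums of `l` terms in a coset of `H` plus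
the potential of the stabilizer of the set of these sums. -/
noncomputable def potential (l : ℕ) (A : ι → Finset G) (L : AddSubgroup G) : ℤ :=
  (l - 1) * Nat.card L - ∑ g : G, (min l (hitCount A L g) : ℤ)

lemma potential_cosetHull (l : ℕ) (hNL : N ≤ L) :
    potential l (fun i ↦ cosetHull N (A i)) L = potential l A L := by
  simp only [potential, hitCount_cosetHull hNL]

end Potential

section Descent

variable {G : Type*} [AddCommGroup G] [Fintype G] {D C : Finset G} {H L : AddSubgroup G} {c : G}

lemma stabilizer_le_of_subset_cosetHull (hD : D.Nonempty) (hDc : D ⊆ cosetHull L {c}) :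
    stabilizer G D ≤ L := by
  obtain ⟨d, hd⟩ := hD
  intro x hx
  have hxd := mem_cosetHull_singleton.1 (hDc (mem_stabilizer_finset'.1 hx hd))
  simpa using L.sub_mem hxd (mem_cosetHull_singleton.1 (hDc hd))

/-- A part `D'` of `D` inside the coset `c + L` has size at least `Φ L - Φ (stabilizer D')`. -/
def HasCosetBound (Φ : AddSubgroup G → ℤ) (D : Finset G) (L : AddSubgroup G) (c : G) : Prop :=
  ∃ D' ⊆ D, D'.Nonempty ∧ D' ⊆ cosetHull L {c} ∧ Φ L ≤ #D' + Φ (stabilizer G D')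

/-- If `L` does not stabilize `D`, a coset of `L` meeting `D` without being contained in it is
disjoint from every `L`-periodic subset of `D`, so the bound for that coset can be added. -/
theorem exists_le_stabilizer_of_hasCosetBound {Φ : AddSubgroup G → ℤ} {X : ℤ}
    (hD : D ⊆ cosetHull H {c})
    (hstep : ∀ L < H, ∀ c ∈ D, ∀ x ∈ L, x + c ∉ D → HasCosetBound Φ D L c)
    (hC : C.Nonempty) (hCD : C ⊆ D) (hX : X ≤ #C + Φ (stabilizer G C)) :
    ∃ L ≤ stabilizer G D, X ≤ #D + Φ L := by
  obtain ⟨L, hL⟩ : ∃ L, L = stabilizer G C := ⟨_, rfl⟩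
  rw [← hL] at hX
  replace hL := hL.le
  induction L using WellFoundedLT.induction generalizing C with | _ L ih
  by_cases hLD : L ≤ stabilizer G D
  · exact ⟨L, hLD, hX.trans (by gcongr)⟩
  obtain ⟨x, hxL, hx⟩ := SetLike.not_le_iff_exists.1 hLD
  rw [mem_stabilizer_finset'] at hx
  push Not at hx
  obtain ⟨d, hd, hxd⟩ := hx
  have hout {E : Finset G} (hED : E ⊆ D) (hLE : L ≤ stabilizer G E) {e : G} (he : e ∈ E) :
      e - d ∉ L := fun hed ↦ hxd <| hED <| by
    have hde := (mem_iff_mem_of_le_stabilizer hLE hed).1 he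
    exact mem_stabilizer_finset'.1 (hLE hxL) hde
  have hLH : L < H := by
    refine (hL.trans (stabilizer_le_of_subset_cosetHull hC (hCD.trans hD))).lt_of_ne ?_
    rintro rfl
    obtain ⟨e, he⟩ := hC
    refine hout hCD hL he ?_
    simpa using L.sub_mem (mem_cosetHull_singleton.1 (hD (hCD he)))
      (mem_cosetHull_singleton.1 (hD hd))
  obtain ⟨D', hD'D, hD'ne, hD'd, hle⟩ := hstep L hLH d hd x hxL hxd
  have hmem {e : G} (he : e ∈ D') : e - d ∈ L := mem_cosetHull_singleton.1 (hD'd he)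
  have hlt : stabilizer G D' < L := by
    refine (stabilizer_le_of_subset_cosetHull hD'ne hD'd).lt_of_ne fun heq ↦ ?_
    obtain ⟨e, he⟩ := hD'ne
    exact hout hD'D heq.ge he (hmem he)
  have hdisj : Disjoint C D' := disjoint_left.2 fun e he he' ↦ hout hCD hL he (hmem he')
  refine ih _ hlt (C := C ∪ D') (hC.mono subset_union_left) (union_subset hCD hD'D) ?_ ?_
  · rw [card_union_of_disjoint hdisj]
    push_cast
    linarith
  · exact (le_inf (hlt.le.trans hL) le_rfl).trans (stabilizer_inf_stabilizer_le C D')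

end Descent

section Bound

variable {G : Type*} [AddCommGroup G] [Fintype G] {ι ρ : Type*} [Fintype ι] {A : ι → Finset G}
  {R : Finset ρ} {p : ρ → G} {H L N : AddSubgroup G} {D : Finset G} {c : G}

/-- The Devos–Goddyn–Mohar bound for the sums of representations of the pattern `p` modulo `H`. -/
def DGMBound (A : ι → Finset G) (R : Finset ρ) (p : ρ → G) (H : AddSubgroup G) : Prop :=
  (patternSums A R p H).Nonempty →
    Nat.card H + potential #R A H ≤
      #(patternSums A R p H) + potential #R A (stabilizer G (patternSums A R p H))

lemma potential_zero (A : ι → Finset G) (L : AddSubgroup G) : potential 0 A L = -Nat.card L := by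
  simp [potential]

lemma dgmBound_empty : DGMBound A ∅ p H := by
  intro hne
  have := natCard_le_card_of_le_stabilizer hne le_rfl
  rw [card_empty, potential_zero, potential_zero]
  omega

lemma DGMBound.le_card_cosetHull (h : DGMBound (fun i ↦ cosetHull N (A i)) R p H) (hNH : N ≤ H)
    (hne : (patternSums A R p H).Nonempty)
    (hN : stabilizer G (cosetHull N (patternSums A R p H)) ≤ N) :
    Nat.card H + potential #R A H ≤ #(cosetHull N (patternSums A R p H)) + potential #R A N := by
  obtain rfl | hR := R.eq_empty_or_nonempty
  · have := natCard_le_card_of_le_stabilizer (cosetHull_nonempty N hne)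
      (le_stabilizer_cosetHull N _)
    rw [card_empty, potential_zero, potential_zero]
    omega
  rw [DGMBound, patternSums_cosetHull hR hNH, hN.antisymm (le_stabilizer_cosetHull N _),
    potential_cosetHull _ hNH, potential_cosetHull _ le_rfl] at h
  exact h (cosetHull_nonempty N hne)

lemma hasCosetBound_of_isRep {τ : ρ → ι} {z : ρ → G} (hLH : L ≤ H) (hIH : DGMBound A R z L)
    (h : IsRep A R p H τ z) (hzc : ∑ r ∈ R, z r - c ∈ L) (hD : patternSums A R p H ⊆ D) :
    HasCosetBound (potential #R A) D L c := by
  have hne : (patternSums A R z L).Nonempty := ⟨_, (h.refl L).sum_mem_patternSums⟩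
  refine ⟨_, (patternSums_subset_patternSums hLH h.sub_mem).trans hD, hne, ?_, ?_⟩
  · refine patternSums_subset_cosetHull.trans
      (cosetHull_subset_of_le_stabilizer (le_stabilizer_cosetHull L _) ?_)
    simpa only [singleton_subset_iff, mem_cosetHull_singleton] using hzc
  · linarith [hIH hne, Nat.card_pos (α := L)]

end Bound

section Uncrossing

variable {G : Type*} {ι ρ : Type*} {A : ι → Finset G} {i j k : ι} {S T : Finset G}

/-- The family `A` with the sets `A i` and `A j` replaced by `S` and `T`. -/
noncomputable def replacePair (A : ι → Finset G) (i j : ι) (S T : Finset G) : ι → Finset G :=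
  Function.update (Function.update A i S) j T

/-- The family `A` with the sets `A i` and `A j` replaced by their union and intersection. -/
noncomputable def uncross (A : ι → Finset G) (i j : ι) : ι → Finset G :=
  replacePair A i j (A i ∪ A j) (A i ∩ A j)

/-- The family `A` without the sets `A i` and `A j`; they are replaced by the empty set so that the
index type does not change. -/
noncomputable def removePair (A : ι → Finset G) (i j : ι) : ι → Finset G :=
  replacePair A i j ∅ ∅

lemma replacePair_left (hij : i ≠ j) : replacePair A i j S T i = S := by simp [replacePair, hij]

lemma replacePair_right : replacePair A i j S T j = T := by simp [replacePair]

lemma replacePair_of_ne (hi : k ≠ i) (hj : k ≠ j) : replacePair A i j S T k = A k := by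
  simp [replacePair, hi, hj]

lemma replacePair_self : replacePair A i j (A i) (A j) = A := by simp [replacePair]

lemma uncross_left (hij : i ≠ j) : uncross A i j i = A i ∪ A j := replacePair_left hij

lemma uncross_right : uncross A i j j = A i ∩ A j := replacePair_right

lemma uncross_of_ne (hi : k ≠ i) (hj : k ≠ j) : uncross A i j k = A k := replacePair_of_ne hi hj

lemma sum_replacePair [Fintype ι] {M : Type*} [AddCommMonoid M] (hij : i ≠ j)
    (F : Finset G → M) : ∑ k, F (replacePair A i j S T k) =
      F S + F T + ∑ k ∈ (univ.erase i).erase j, F (A k) := by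
  rw [← add_sum_erase univ _ (mem_univ i),
    ← add_sum_erase (univ.erase i) _ (mem_erase.2 ⟨hij.symm, mem_univ j⟩), replacePair_left hij,
    replacePair_right, add_assoc]
  congr 2
  refine sum_congr rfl fun k hk ↦ ?_
  simp only [mem_erase] at hk
  rw [replacePair_of_ne hk.2.1 hk.1]

lemma sum_card_sq_lt_sum_card_uncross_sq [Fintype ι] (hij : i ≠ j) (hi : ¬ A i ⊆ A j)
    (hj : ¬ A j ⊆ A i) : ∑ k, #(A k) ^ 2 < ∑ k, #(uncross A i j k) ^ 2 := by
  have hlti : #(A i ∩ A j) < #(A i) :=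
    card_lt_card (inter_subset_left.ssubset_of_not_subset fun h ↦ hi (subset_inter_iff.1 h).2)
  have hltj : #(A i ∩ A j) < #(A j) :=
    card_lt_card (inter_subset_right.ssubset_of_not_subset fun h ↦ hj (subset_inter_iff.1 h).1)
  have hadd := card_union_add_card_inter (A i) (A j)
  conv_lhs => rw [← replacePair_self (A := A) (i := i) (j := j)]
  rw [uncross, sum_replacePair hij (#· ^ 2), sum_replacePair hij (#· ^ 2)]
  gcongr ?_ + _
  zify at *
  nlinarith [mul_pos (sub_pos.2 hlti) (sub_pos.2 hltj)]

variable [AddCommGroup G] {R : Finset ρ} {p y : ρ → G} {σ : ρ → ι} {H L N : AddSubgroup G}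

lemma le_stabilizer_uncross (hij : i ≠ j) (hA : ∀ k, N ≤ stabilizer G (A k)) (k : ι) :
    N ≤ stabilizer G (uncross A i j k) := by
  by_cases hi : k = i
  · rw [hi, uncross_left hij]
    exact (le_inf (hA i) (hA j)).trans (stabilizer_inf_stabilizer_le _ _)
  by_cases hj : k = j
  · rw [hj, uncross_right]
    refine fun x hx ↦ mem_stabilizer_finset'.2 fun g hg ↦ ?_
    obtain ⟨hgi, hgj⟩ := mem_inter.1 hg
    exact mem_inter.2 ⟨mem_stabilizer_finset'.1 (hA i hx) hgi,
      mem_stabilizer_finset'.1 (hA j hx) hgj⟩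
  · rw [uncross_of_ne hi hj]
    exact hA k

namespace IsRep

lemma comp_perm {B : ι → Finset G} (h : IsRep B R p H σ y) (π : Equiv.Perm ι)
    (hA : ∀ r ∈ R, y r ∈ A (π (σ r))) : IsRep A R p H (π ∘ σ) y :=
  ⟨π.injective.injOn.comp h.injOn (Set.mapsTo_univ _ _), hA, h.sub_mem⟩

lemma uncross_of_forall_ne_right (hij : i ≠ j) (h : IsRep A R p H σ y) (hj : ∀ r ∈ R, σ r ≠ j) :
    IsRep (uncross A i j) R p H σ y := by
  refine ⟨h.injOn, fun r hr ↦ ?_, h.sub_mem⟩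
  have hmem := h.mem r hr
  by_cases hi : σ r = i
  · rw [hi, uncross_left hij]
    exact mem_union_left _ (hi ▸ hmem)
  · rwa [uncross_of_ne hi (hj r hr)]

lemma uncross_of_forall_ne_left (hij : i ≠ j) (h : IsRep A R p H σ y) (hi : ∀ r ∈ R, σ r ≠ i) :
    IsRep (uncross A i j) R p H (Equiv.swap i j ∘ σ) y := by
  refine h.comp_perm _ fun r hr ↦ ?_
  have hmem := h.mem r hr
  by_cases hj : σ r = j
  · rw [hj, Equiv.swap_apply_right, uncross_left hij]
    exact mem_union_right _ (hj ▸ hmem)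
  · rwa [Equiv.swap_apply_of_ne_of_ne (hi r hr) hj,
      uncross_of_ne (hi r hr) hj]

lemma exists_of_uncross (hij : i ≠ j) (h : IsRep (uncross A i j) R p H σ y) :
    ∃ τ, IsRep A R p H τ y := by
  have hmem : ∀ r ∈ R, (σ r = i → y r ∈ A i ∪ A j) ∧ (σ r = j → y r ∈ A i ∩ A j) ∧
      (σ r ≠ i → σ r ≠ j → y r ∈ A (σ r)) := by
    refine fun r hr ↦ ⟨fun hi ↦ ?_, fun hj ↦ ?_, fun hi hj ↦ ?_⟩
    · simpa only [hi, uncross_left hij] using h.mem r hr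
    · simpa only [hj, uncross_right] using h.mem r hr
    · simpa only [uncross_of_ne hi hj] using h.mem r hr
  by_cases hkeep : ∀ r ∈ R, σ r = i → y r ∈ A i
  · refine ⟨σ, h.injOn, fun r hr ↦ ?_, h.sub_mem⟩
    by_cases hi : σ r = i
    · exact hi ▸ hkeep r hr hi
    by_cases hj : σ r = j
    · exact hj ▸ (mem_inter.1 ((hmem r hr).2.1 hj)).2
    · exact (hmem r hr).2.2 hi hj
  · push Not at hkeep
    obtain ⟨r₁, hr₁, hi₁, hy₁⟩ := hkeep
    refine ⟨_, h.comp_perm (Equiv.swap i j) fun r hr ↦ ?_⟩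
    by_cases hi : σ r = i
    · obtain rfl := h.injOn hr hr₁ (hi.trans hi₁.symm)
      rw [hi, Equiv.swap_apply_left]
      exact (mem_union.1 ((hmem r hr).1 hi)).resolve_left hy₁
    by_cases hj : σ r = j
    · rw [hj, Equiv.swap_apply_right]
      exact (mem_inter.1 ((hmem r hr).2.1 hj)).1
    · rw [Equiv.swap_apply_of_ne_of_ne hi hj]
      exact (hmem r hr).2.2 hi hj

lemma removePair_erase_erase {r₁ r₂ : ρ} (h : IsRep A R p H σ y) (hr₁ : r₁ ∈ R) (hr₂ : r₂ ∈ R)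
    (hi : σ r₁ = i) (hj : σ r₂ = j) :
    IsRep (removePair A i j) ((R.erase r₁).erase r₂) p H σ y := by
  have hS := h.mono ((erase_subset r₂ _).trans (erase_subset r₁ R))
  refine ⟨hS.injOn, fun r hr ↦ ?_, hS.sub_mem⟩
  obtain ⟨hrr₂, hr⟩ := mem_erase.1 hr
  obtain ⟨hrr₁, hr⟩ := mem_erase.1 hr
  rw [removePair, replacePair_of_ne]
  · exact h.mem r hr
  · exact fun hri ↦ hrr₁ (h.injOn hr hr₁ (hri.trans hi.symm))
  · exact fun hrj ↦ hrr₂ (h.injOn hr hr₂ (hrj.trans hj.symm))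

lemma exists_eq_of_forall_sum_sub_notMem {a : G} {r₀ : ρ} (hr₀ : r₀ ∈ R)
    (h : IsRep A (R.erase r₀) p H σ y)
    (hno : ∀ τ z, IsRep A R p H τ z → ∑ r ∈ R, z r - ∑ r ∈ R, y r ∉ L)
    (ha : a ∈ A k) (hap : a - p r₀ ∈ H) (hay : a - y r₀ ∈ L) : ∃ s ∈ R.erase r₀, σ s = k := by
  by_contra! hk
  have hins := h.insert (notMem_erase r₀ R) hk ha hap
  rw [insert_erase hr₀] at hins
  refine hno _ _ hins ?_
  have hsum := sum_insert_update (notMem_erase r₀ R) y a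
  rw [insert_erase hr₀] at hsum
  rwa [hsum, ← add_sum_erase R y hr₀, add_sub_add_right_eq_sub]

end IsRep

variable [Fintype G]

lemma patternSums_uncross_subset (hij : i ≠ j) :
    patternSums (uncross A i j) R p H ⊆ patternSums A R p H := by
  intro g hg
  obtain ⟨σ, y, h, rfl⟩ := mem_patternSums.1 hg
  obtain ⟨τ, hτ⟩ := h.exists_of_uncross hij
  exact hτ.sum_mem_patternSums

lemma add_add_mem_patternSums (hij : i ≠ j) {r₁ r₂ : ρ} (hr₁ : r₁ ∈ R) (hr₂ : r₂ ∈ R)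
    (hr : r₁ ≠ r₂) {e u v : G}
    (he : e ∈ patternSums (removePair A i j) ((R.erase r₁).erase r₂) p H)
    (hu : u ∈ A i) (hup : u - p r₁ ∈ H) (hv : v ∈ A j) (hvp : v - p r₂ ∈ H) :
    e + (u + v) ∈ patternSums A R p H := by
  obtain ⟨σ, y, h, rfl⟩ := mem_patternSums.1 he
  have hi : ∀ r ∈ (R.erase r₁).erase r₂, σ r ≠ i := fun r hr hi ↦ by
    simpa [hi, removePair, replacePair_left hij] using h.mem r hr
  have hj : ∀ r ∈ (R.erase r₁).erase r₂, σ r ≠ j := fun r hr hj ↦ by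
    simpa [hj, removePair, replacePair_right] using h.mem r hr
  have hA : IsRep A ((R.erase r₁).erase r₂) p H σ y := by
    refine ⟨h.injOn, fun r hr ↦ ?_, h.sub_mem⟩
    simpa only [removePair, replacePair_of_ne (hi r hr) (hj r hr)] using h.mem r hr
  have hins₂ := hA.insert (notMem_erase r₂ _) hj hv hvp
  have hsum₂ := sum_insert_update (notMem_erase r₂ (R.erase r₁)) y v
  rw [insert_erase (mem_erase.2 ⟨hr.symm, hr₂⟩)] at hins₂ hsum₂
  have hins₁ := hins₂.insert (notMem_erase r₁ R) (fun r hr ↦ ?_) hu hup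
  · have hmem := hins₁.sum_mem_patternSums
    rwa [sum_insert_update (notMem_erase r₁ R), hsum₂, insert_erase hr₁, ← add_assoc,
      add_comm] at hmem
  · obtain rfl | hr₂ := eq_or_ne r r₂
    · simpa using hij.symm
    · rw [Function.update_of_ne hr₂]
      exact hi r (mem_erase.2 ⟨hr₂, hr⟩)

variable [Fintype ι] {g : G}

lemma hitCount_replacePair (hij : i ≠ j) (L : AddSubgroup G) (g : G) :
    hitCount (replacePair A i j S T) L g = (if g ∈ cosetHull L S then 1 else 0) +
      (if g ∈ cosetHull L T then 1 else 0) + hitCount (removePair A i j) L g := by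
  have hempty : g ∉ cosetHull L ∅ := by simp [mem_cosetHull]
  simp only [hitCount, card_filter]
  rw [removePair, sum_replacePair hij fun C ↦ if g ∈ cosetHull L C then 1 else 0,
    sum_replacePair hij fun C ↦ if g ∈ cosetHull L C then 1 else 0, if_neg hempty]
  simp only [add_zero, zero_add]

lemma hitCount_eq_add_hitCount_removePair (hij : i ≠ j) (L : AddSubgroup G) (g : G) :
    hitCount A L g = (if g ∈ cosetHull L (A i) then 1 else 0) +
      (if g ∈ cosetHull L (A j) then 1 else 0) + hitCount (removePair A i j) L g := by
  rw [← hitCount_replacePair hij, replacePair_self]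

lemma hitCount_uncross_le (hij : i ≠ j) (L : AddSubgroup G) (g : G) :
    hitCount (uncross A i j) L g ≤ hitCount A L g := by
  have hi : g ∈ cosetHull L (A i ∩ A j) → g ∈ cosetHull L (A i) :=
    fun h ↦ cosetHull_subset_cosetHull le_rfl inter_subset_left h
  have hj : g ∈ cosetHull L (A i ∩ A j) → g ∈ cosetHull L (A j) :=
    fun h ↦ cosetHull_subset_cosetHull le_rfl inter_subset_right h
  rw [uncross, hitCount_replacePair hij,
    hitCount_eq_add_hitCount_removePair (A := A) hij, cosetHull_union]
  simp only [mem_union]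
  split_ifs <;> first | omega | tauto

lemma hitCount_uncross_of_le_stabilizer (hij : i ≠ j) (hA : ∀ k, N ≤ stabilizer G (A k))
    (hLN : L ≤ N) : hitCount (uncross A i j) L g = hitCount A N g := by
  have hinter := le_stabilizer_uncross hij hA j
  rw [uncross_right] at hinter
  rw [hitCount_of_le_stabilizer (le_stabilizer_uncross hij hA) hLN, uncross,
    hitCount_replacePair hij,
    hitCount_eq_add_hitCount_removePair (A := A) hij, cosetHull_union,
    cosetHull_eq_self hinter, cosetHull_eq_self (hA i), cosetHull_eq_self (hA j)]
  simp only [mem_union, mem_inter]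
  split_ifs <;> first | omega | tauto

end Uncrossing

section UncrossingStep

variable {G : Type*} [AddCommGroup G] [Fintype G] {A B : Finset G} {H L N : AddSubgroup G}
  {g u v : G}

/-- The sums of an element of `A` and an element of `B`, one of which lies in the coset `u + L` and
the other one in the coset `v + L`. -/
noncomputable def crossSums (A B : Finset G) (L : AddSubgroup G) (u v : G) : Finset G :=
  (A ∩ cosetHull L {u} + B ∩ cosetHull L {v}) ∪ (A ∩ cosetHull L {v} + B ∩ cosetHull L {u})

lemma add_mem_crossSums (hu : u ∈ A) (hv : v ∈ B) : u + v ∈ crossSums A B L u v :=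
  mem_union_left _ (add_mem_add (mem_inter.2 ⟨hu, subset_cosetHull L _ (mem_singleton_self u)⟩)
    (mem_inter.2 ⟨hv, subset_cosetHull L _ (mem_singleton_self v)⟩))

lemma mem_add_of_natCard_lt (hA : A ⊆ cosetHull L {u}) (hB : B ⊆ cosetHull L {v})
    (hg : g - (u + v) ∈ L) (hlt : Nat.card L < #A + #B) : g ∈ A + B := by
  have hgB : g +ᵥ -B ⊆ cosetHull L {u} := by
    intro z hz
    obtain ⟨b, hb, rfl⟩ := mem_vadd_finset.1 hz
    have hbv := mem_cosetHull_singleton.1 (hB (mem_neg'.1 hb))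
    refine mem_cosetHull_singleton.2 ?_
    convert L.sub_mem hg hbv using 1
    rw [vadd_eq_add]
    abel
  obtain ⟨a, ha⟩ := inter_nonempty_of_card_lt_card_add_card hA hgB
    (by rwa [card_cosetHull_singleton, card_vadd_finset, card_neg])
  obtain ⟨haA, hagB⟩ := mem_inter.1 ha
  obtain ⟨b, hb, rfl⟩ := mem_vadd_finset.1 hagB
  exact mem_add.2 ⟨_, haA, -b, mem_neg'.1 hb, by simp⟩

lemma natCard_le_card_sdiff_add (hNL : N ≤ L) (A B : Finset G) (u : G) :
    Nat.card L ≤ #(cosetHull L {u} \ cosetHull N (A ∪ B)) + #(cosetHull N (A ∩ cosetHull L {u})) +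
      #(cosetHull N (B ∩ cosetHull L {u})) := by
  have hstab := hNL.trans (le_stabilizer_cosetHull L {u})
  rw [← card_cosetHull_singleton L u, add_assoc, cosetHull_inter hstab, cosetHull_inter hstab,
    cosetHull_union, ← card_sdiff_add_card_inter _ (cosetHull N A ∪ cosetHull N B), inter_comm,
    union_inter_distrib_right]
  gcongr
  exact card_union_le _ _

lemma min_card_add_card_le_card_cosetHull_crossSums (hu : u ∈ A) (hv : v ∈ B)
    (hN : stabilizer G (cosetHull N (crossSums A B L u v)) ≤ N) :
    min (#(cosetHull N (A ∩ cosetHull L {u})) + #(cosetHull N (B ∩ cosetHull L {v})))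
        (#(cosetHull N (A ∩ cosetHull L {v})) + #(cosetHull N (B ∩ cosetHull L {u}))) ≤
      #(cosetHull N (crossSums A B L u v)) + Nat.card N := by
  have hAu : (A ∩ cosetHull L {u}).Nonempty :=
    ⟨u, mem_inter.2 ⟨hu, subset_cosetHull L _ (mem_singleton_self u)⟩⟩
  have hBv : (B ∩ cosetHull L {v}).Nonempty :=
    ⟨v, mem_inter.2 ⟨hv, subset_cosetHull L _ (mem_singleton_self v)⟩⟩
  obtain hempty | hne :=
    (A ∩ cosetHull L {v} + B ∩ cosetHull L {u}).eq_empty_or_nonempty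
  · rw [crossSums, hempty, union_empty] at hN ⊢
    exact (min_le_left _ _).trans (card_cosetHull_add_card_cosetHull_le hAu hBv hN)
  obtain ⟨hAv, hBu⟩ := add_nonempty.1 hne
  rw [crossSums, cosetHull_union, cosetHull_add, cosetHull_add] at hN ⊢
  refine (min_le_min
    (card_add_card_le_card_add_add_card_stabilizer (cosetHull_nonempty N hAu)
      (cosetHull_nonempty N hBv))
    (card_add_card_le_card_add_add_card_stabilizer (cosetHull_nonempty N hAv)
      (cosetHull_nonempty N hBu))).trans
    ((min_card_add_card_stabilizer_le_union _ _).trans ?_)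
  gcongr
  exact AddSubgroup.card_le_of_le hN

theorem natCard_le_card_cosetHull_crossSums (hu : u ∈ A) (hv : v ∈ B) (hNL : N ≤ L)
    (hN : stabilizer G (cosetHull N (crossSums A B L u v)) ≤ N) (hg : g - (u + v) ∈ L)
    (hgZ : g ∉ cosetHull N (crossSums A B L u v)) :
    Nat.card L ≤ #(cosetHull N (crossSums A B L u v)) + Nat.card N +
      #((cosetHull L {u} ∪ cosetHull L {v}) \ cosetHull N (A ∪ B)) := by
  have hhull (C : Finset G) (w : G) : cosetHull N (C ∩ cosetHull L {w}) ⊆ cosetHull L {w} :=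
    cosetHull_subset_of_le_stabilizer (hNL.trans (le_stabilizer_cosetHull L _)) inter_subset_right
  have huv : #(cosetHull N (A ∩ cosetHull L {u})) + #(cosetHull N (B ∩ cosetHull L {v})) ≤
      Nat.card L := by
    by_contra! hlt
    refine hgZ (cosetHull_subset_cosetHull le_rfl subset_union_left ?_)
    rw [cosetHull_add]
    exact mem_add_of_natCard_lt (hhull A u) (hhull B v) hg hlt
  have hvu : #(cosetHull N (A ∩ cosetHull L {v})) + #(cosetHull N (B ∩ cosetHull L {u})) ≤
      Nat.card L := by
    by_contra! hlt
    refine hgZ (cosetHull_subset_cosetHull le_rfl subset_union_right ?_)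
    rw [cosetHull_add]
    exact mem_add_of_natCard_lt (hhull A v) (hhull B u) (by rwa [add_comm v u]) hlt
  have hZ := min_card_add_card_le_card_cosetHull_crossSums hu hv hN
  have hXu := natCard_le_card_sdiff_add hNL A B u
  have hXv := natCard_le_card_sdiff_add hNL A B v
  rw [union_sdiff_distrib]
  by_cases heq : cosetHull L {u} = cosetHull L {v}
  · rw [heq] at hZ hXu ⊢
    rw [union_self]
    omega
  · rw [card_union_of_disjoint]
    · omega
    refine Disjoint.mono sdiff_subset sdiff_subset (disjoint_left.2 fun z hzu hzv ↦ heq ?_)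
    rw [mem_cosetHull_singleton] at hzu hzv
    have hcoset {a : G} (h : z - a ∈ L) : cosetHull L {a} = cosetHull L {z} := by
      ext w
      rw [mem_cosetHull_singleton, mem_cosetHull_singleton, ← sub_add_sub_cancel w z a,
        L.add_mem_cancel_right h]
    rw [hcoset hzu, hcoset hzv]

variable {ι ρ : Type*} {F : ι → Finset G} {i j : ι} {R : Finset ρ} {r₁ r₂ : ρ} {p y : ρ → G}
  {σ : ρ → ι} {c x : G}

lemma add_crossSums_subset_patternSums (hij : i ≠ j) (hr₁ : r₁ ∈ R) (hr₂ : r₂ ∈ R)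
    (hr : r₁ ≠ r₂) :
    patternSums (removePair F i j) ((R.erase r₁).erase r₂) y L +
      crossSums (F i) (F j) L (y r₁) (y r₂) ⊆ patternSums F R y L := by
  rw [crossSums, add_union, union_subset_iff]
  simp only [add_subset_iff, mem_add, mem_inter, mem_cosetHull_singleton]
  refine ⟨?_, ?_⟩
  · rintro e he _ ⟨a, ⟨ha, hay⟩, b, ⟨hb, hby⟩, rfl⟩
    exact add_add_mem_patternSums hij hr₁ hr₂ hr he ha hay hb hby
  · rintro e he _ ⟨a, ⟨ha, hay⟩, b, ⟨hb, hby⟩, rfl⟩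
    rw [erase_right_comm] at he
    exact add_add_mem_patternSums hij hr₂ hr₁ hr.symm he ha hay hb hby

lemma IsRep.exists_of_mem_cosetHull_removePair (hij : i ≠ j) (hLH : L ≤ H)
    (h : IsRep F R p H σ y)
    (hno : ∀ τ z, IsRep (uncross F i j) R p H τ z → ∑ r ∈ R, z r - ∑ r ∈ R, y r ∉ L)
    (hr₁ : r₁ ∈ R) (hr₂ : r₂ ∈ R) (hi : σ r₁ = i) (hj : σ r₂ = j)
    (hg : g ∈ cosetHull L {y r₁} ∪ cosetHull L {y r₂}) {k : ι}
    (hgk : g ∈ cosetHull L (removePair F i j k)) : ∃ s ∈ (R.erase r₁).erase r₂, σ s = k := by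
  have hki : k ≠ i := by
    rintro rfl
    simp [removePair, replacePair_left hij, mem_cosetHull] at hgk
  have hkj : k ≠ j := by
    rintro rfl
    simp [removePair, replacePair_right, mem_cosetHull] at hgk
  rw [removePair, replacePair_of_ne hki hkj, ← uncross_of_ne (A := F) hki hkj] at hgk
  obtain ⟨a, ha, hga⟩ := mem_cosetHull.1 hgk
  have hay {r : ρ} (hgr : g ∈ cosetHull L {y r}) : a - y r ∈ L := by
    simpa using L.sub_mem (mem_cosetHull_singleton.1 hgr) hga
  have hap {r : ρ} (hr : r ∈ R) (har : a - y r ∈ L) : a - p r ∈ H := by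
    simpa using H.add_mem (hLH har) (h.sub_mem r hr)
  have hswap := (h.mono (erase_subset r₁ R)).uncross_of_forall_ne_left hij fun r hr hri ↦
    (mem_erase.1 hr).1 (h.injOn (mem_of_mem_erase hr) hr₁ (hri.trans hi.symm))
  have hstay := (h.mono (erase_subset r₂ R)).uncross_of_forall_ne_right hij fun r hr hrj ↦
    (mem_erase.1 hr).1 (h.injOn (mem_of_mem_erase hr) hr₂ (hrj.trans hj.symm))
  obtain ⟨s, hs, rfl⟩ : ∃ s ∈ R, σ s = k := by
    obtain hg | hg := mem_union.1 hg
    · obtain ⟨s, hs, hsk⟩ := hswap.exists_eq_of_forall_sum_sub_notMem hr₁ hno ha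
        (hap hr₁ (hay hg)) (hay hg)
      rw [Function.comp_apply, ← Equiv.eq_symm_apply, Equiv.symm_swap,
        Equiv.swap_apply_of_ne_of_ne hki hkj] at hsk
      exact ⟨s, mem_of_mem_erase hs, hsk⟩
    · obtain ⟨s, hs, hsk⟩ := hstay.exists_eq_of_forall_sum_sub_notMem hr₂ hno ha
        (hap hr₂ (hay hg)) (hay hg)
      exact ⟨s, mem_of_mem_erase hs, hsk⟩
  refine ⟨s, mem_erase.2 ⟨?_, mem_erase.2 ⟨?_, hs⟩⟩, rfl⟩
  · rintro rfl; exact hkj hj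
  · rintro rfl; exact hki hi

variable [Fintype ι]

lemma IsRep.exists_hitCount_removePair_le (hij : i ≠ j) (hLH : L ≤ H) (h : IsRep F R p H σ y)
    (hno : ∀ τ z, IsRep (uncross F i j) R p H τ z → ∑ r ∈ R, z r - ∑ r ∈ R, y r ∉ L) :
    ∃ r₁ ∈ R, ∃ r₂ ∈ R, σ r₁ = i ∧ σ r₂ = j ∧
      ∀ g ∈ cosetHull L {y r₁} ∪ cosetHull L {y r₂},
        hitCount (removePair F i j) L g ≤ #((R.erase r₁).erase r₂) := by
  obtain ⟨r₁, hr₁, hi⟩ : ∃ r₁ ∈ R, σ r₁ = i := by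
    by_contra! hi
    exact hno _ y (h.uncross_of_forall_ne_left hij hi) (by simp)
  obtain ⟨r₂, hr₂, hj⟩ : ∃ r₂ ∈ R, σ r₂ = j := by
    by_contra! hj
    exact hno _ y (h.uncross_of_forall_ne_right hij hj) (by simp)
  refine ⟨r₁, hr₁, r₂, hr₂, hi, hj, fun g hg ↦ (card_le_card fun k hk ↦ ?_).trans
    (card_image_le (f := σ))⟩
  exact mem_image.2 (h.exists_of_mem_cosetHull_removePair hij hLH hno hr₁ hr₂ hi hj hg
    (mem_filter.1 hk).2)

lemma min_hitCount_sub_add_ite_le (hij : i ≠ j) (hNL : N ≤ L) {m : ℕ} {X : Finset G}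
    (hX : ∀ g ∈ X, g ∈ cosetHull L (F i ∪ F j) ∧ g ∉ cosetHull N (F i ∪ F j) ∧
      hitCount (removePair F i j) L g ≤ m) (g : G) :
    (min m (hitCount (removePair F i j) L g) : ℤ) + (if g ∈ X then 1 else 0) +
        min ((m + 2 : ℕ) : ℤ) (hitCount (uncross F i j) N g) ≤
      (min m (hitCount (removePair F i j) N g) : ℤ) +
        min ((m + 2 : ℕ) : ℤ) (hitCount (uncross F i j) L g) := by
  have hrem := hitCount_mono hNL (fun k ↦ Subset.refl (removePair F i j k)) g
  have hunion : g ∈ cosetHull N (F i ∪ F j) → g ∈ cosetHull L (F i ∪ F j) :=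
    fun h ↦ cosetHull_subset_cosetHull hNL Subset.rfl h
  have hinter : g ∈ cosetHull N (F i ∩ F j) → g ∈ cosetHull L (F i ∩ F j) :=
    fun h ↦ cosetHull_subset_cosetHull hNL Subset.rfl h
  have hsub : g ∈ cosetHull N (F i ∩ F j) → g ∈ cosetHull N (F i ∪ F j) :=
    fun h ↦ cosetHull_subset_cosetHull le_rfl (inter_subset_left.trans subset_union_left) h
  have hg := hX g
  rw [uncross, hitCount_replacePair hij, hitCount_replacePair hij]
  split_ifs <;> grind

lemma potential_uncross_add_le (hij : i ≠ j) (hNL : N ≤ L) {m : ℕ} {X : Finset G}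
    (hX : ∀ g ∈ X, g ∈ cosetHull L (F i ∪ F j) ∧ g ∉ cosetHull N (F i ∪ F j) ∧
      hitCount (removePair F i j) L g ≤ m) :
    potential (m + 2) (uncross F i j) L + potential m (removePair F i j) N + #X + 2 * Nat.card N ≤
      potential (m + 2) (uncross F i j) N + potential m (removePair F i j) L + 2 * Nat.card L := by
  have hsum := sum_le_sum fun g (_ : g ∈ univ) ↦ min_hitCount_sub_add_ite_le hij hNL hX g
  simp only [sum_add_distrib, sum_ite_mem, univ_inter, sum_const, nsmul_one] at hsum
  simp only [potential, Nat.cast_add, Nat.cast_ofNat] at hsum ⊢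
  linarith

lemma potential_uncross_le_card_add_crossSums (hij : i ≠ j) (hu : u ∈ F i) (hv : v ∈ F j)
    (hNL : N ≤ L) (hIH : DGMBound (fun k ↦ cosetHull N (removePair F i j k)) R p L)
    (hE : (patternSums (removePair F i j) R p L).Nonempty)
    (hN : N = stabilizer G (patternSums (removePair F i j) R p L + crossSums (F i) (F j) L u v))
    (hcount : ∀ g ∈ cosetHull L {u} ∪ cosetHull L {v}, hitCount (removePair F i j) L g ≤ #R)
    (hg : g - (u + v) ∈ L) (hgZ : g ∉ cosetHull N (crossSums (F i) (F j) L u v)) :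
    potential (#R + 2) (uncross F i j) L ≤
      #(patternSums (removePair F i j) R p L + crossSums (F i) (F j) L u v) +
        potential (#R + 2) (uncross F i j) N := by
  obtain ⟨E, hE_eq⟩ : ∃ E, E = patternSums (removePair F i j) R p L := ⟨_, rfl⟩
  obtain ⟨Z, hZ_eq⟩ : ∃ Z, Z = crossSums (F i) (F j) L u v := ⟨_, rfl⟩
  rw [← hE_eq, ← hZ_eq] at hN ⊢
  have hsub {w : G} (hw : w ∈ F i ∪ F j) : cosetHull L {w} ⊆ cosetHull L (F i ∪ F j) :=
    cosetHull_subset_cosetHull le_rfl (singleton_subset_iff.2 hw)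
  have hZ : Z.Nonempty := ⟨_, hZ_eq ▸ add_mem_crossSums hu hv⟩
  have hEZ : cosetHull N (E + Z) = E + Z := cosetHull_eq_self hN.le
  have hstabE : stabilizer G (cosetHull N E) ≤ N := by
    refine (le_stabilizer_add le_rfl (cosetHull N Z)).trans ?_
    rw [← cosetHull_add, hEZ, hN]
  have hstabZ : stabilizer G (cosetHull N Z) ≤ N := by
    refine (le_stabilizer_add le_rfl (cosetHull N E)).trans ?_
    rw [add_comm, ← cosetHull_add, hEZ, hN]
  have hkneser := card_cosetHull_add_card_cosetHull_le (hE_eq ▸ hE) hZ (hEZ.symm ▸ hN.ge)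
  have hbound := hIH.le_card_cosetHull hNL hE (hE_eq ▸ hstabE)
  have hcross := natCard_le_card_cosetHull_crossSums hu hv hNL (hZ_eq ▸ hstabZ) hg hgZ
  have hpotential := potential_uncross_add_le hij hNL (m := #R)
    (X := (cosetHull L {u} ∪ cosetHull L {v}) \ cosetHull N (F i ∪ F j)) fun g hg ↦ by
      obtain ⟨hg, hgN⟩ := mem_sdiff.1 hg
      exact ⟨union_subset (hsub (mem_union_left _ hu)) (hsub (mem_union_right _ hv)) hg, hgN,
        hcount g hg⟩
  rw [hEZ] at hkneser
  rw [← hE_eq] at hbound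
  rw [← hZ_eq] at hcross
  zify at hkneser hcross
  linarith

lemma IsRep.hasCosetBound_uncross (hij : i ≠ j) (hLH : L ≤ H) (h : IsRep F R p H σ y)
    (hIH : ∀ (A : ι → Finset G) (S : Finset ρ) q, DGMBound A S q L) (hr₁ : r₁ ∈ R) (hr₂ : r₂ ∈ R)
    (hi : σ r₁ = i) (hj : σ r₂ = j)
    (hcount : ∀ g ∈ cosetHull L {y r₁} ∪ cosetHull L {y r₂},
      hitCount (removePair F i j) L g ≤ #((R.erase r₁).erase r₂))
    (hx : x ∈ L) (hxc : x + ∑ r ∈ R, y r ∉ patternSums F R p H) :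
    HasCosetBound (potential #R (uncross F i j)) (patternSums F R p H) L (∑ r ∈ R, y r) := by
  have hr : r₁ ≠ r₂ := by rintro rfl; exact hij (hi.symm.trans hj)
  have hmem₂ : r₂ ∈ R.erase r₁ := mem_erase.2 ⟨hr.symm, hr₂⟩
  obtain ⟨E, hE⟩ : ∃ E, E = patternSums (removePair F i j) ((R.erase r₁).erase r₂) y L := ⟨_, rfl⟩
  obtain ⟨Z, hZ⟩ : ∃ Z, Z = crossSums (F i) (F j) L (y r₁) (y r₂) := ⟨_, rfl⟩
  have hsub : E + Z ⊆ patternSums F R y L := by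
    rw [hE, hZ]
    exact add_crossSums_subset_patternSums hij hr₁ hr₂ hr
  have hsubD := hsub.trans (patternSums_subset_patternSums hLH h.sub_mem)
  have he : ∑ r ∈ (R.erase r₁).erase r₂, y r ∈ E := by
    rw [hE]
    exact ((h.removePair_erase_erase hr₁ hr₂ hi hj).refl L).sum_mem_patternSums
  have hu : y r₁ ∈ F i := hi ▸ h.mem r₁ hr₁
  have hv : y r₂ ∈ F j := hj ▸ h.mem r₂ hr₂
  have hEZ : (E + Z).Nonempty := ⟨_, add_mem_add he (hZ ▸ add_mem_crossSums hu hv)⟩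
  have hNL : stabilizer G (E + Z) ≤ L :=
    stabilizer_le_of_subset_cosetHull hEZ (hsub.trans patternSums_subset_cosetHull)
  refine ⟨E + Z, hsubD, hEZ, hsub.trans patternSums_subset_cosetHull, ?_⟩
  have hsum : x + ∑ r ∈ R, y r =
      ∑ r ∈ (R.erase r₁).erase r₂, y r + (x + (y r₁ + y r₂)) := by
    rw [← add_sum_erase R y hr₁, ← add_sum_erase _ y hmem₂]
    abel
  have hgZ : x + (y r₁ + y r₂) ∉ cosetHull (stabilizer G (E + Z)) Z := fun hg ↦ hxc <| hsubD <| by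
    rw [← cosetHull_eq_self (C := E + Z) le_rfl, cosetHull_add, hsum]
    exact add_mem_add (subset_cosetHull _ _ he) hg
  have hcard : #R = #((R.erase r₁).erase r₂) + 2 := by
    rw [← card_erase_add_one hr₁, ← card_erase_add_one hmem₂]
  rw [hE, hZ] at hNL hgZ ⊢
  rw [hcard]
  exact potential_uncross_le_card_add_crossSums hij hu hv hNL (hIH _ _ _) ⟨_, hE ▸ he⟩ rfl hcount
    (by simpa using hx) hgZ

/-- Uncrossing may destroy all the representations whose sum lies in `c + L`. In that case both sets
of the pair are used by a representation of `c`, and few of the other sets meet the two cosets of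
`L` in question, so sums that use both sets of the pair make up for the loss. -/
theorem hasCosetBound_uncross (hij : i ≠ j) (hLH : L ≤ H)
    (hIH : ∀ (A : ι → Finset G) (S : Finset ρ) q, DGMBound A S q L)
    (hc : c ∈ patternSums F R p H) (hx : x ∈ L) (hxc : x + c ∉ patternSums F R p H) :
    HasCosetBound (potential #R (uncross F i j)) (patternSums F R p H) L c := by
  obtain ⟨σ, y, h, rfl⟩ := mem_patternSums.1 hc
  by_cases hno : ∀ τ z, IsRep (uncross F i j) R p H τ z → ∑ r ∈ R, z r - ∑ r ∈ R, y r ∉ L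
  · obtain ⟨r₁, hr₁, r₂, hr₂, hi, hj, hcount⟩ := h.exists_hitCount_removePair_le hij hLH hno
    exact h.hasCosetBound_uncross hij hLH hIH hr₁ hr₂ hi hj hcount hx hxc
  · push Not at hno
    obtain ⟨τ, z, hz, hzL⟩ := hno
    exact hasCosetBound_of_isRep hLH (hIH _ _ _) hz hzL (patternSums_uncross_subset hij)

end UncrossingStep

section Start

variable {G : Type*} [AddCommGroup G] [Fintype G] {ι ρ : Type*} {A : ι → Finset G}
  {R : Finset ρ} {p y : ρ → G} {σ : ρ → ι} {H L : AddSubgroup G}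

lemma sum_inter_cosetHull_subset_patternSums (hσ : Set.InjOn σ R) :
    ∑ r ∈ R, A (σ r) ∩ cosetHull H {p r} ⊆ patternSums A R p H := by
  intro g hg
  rw [← mem_coe, coe_sum, Set.mem_finsetSum] at hg
  obtain ⟨z, hz, rfl⟩ := hg
  simp only [coe_inter, Set.mem_inter_iff, mem_coe, mem_cosetHull_singleton] at hz
  exact IsRep.sum_mem_patternSums ⟨hσ, fun r hr ↦ (hz hr).1, fun r hr ↦ (hz hr).2⟩

lemma exists_isRep_forall_not_ssubset (hne : (patternSums A R p H).Nonempty) :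
    ∃ σ y, IsRep A R p H σ y ∧ ∀ k, (∀ r ∈ R, σ r ≠ k) → ∀ r ∈ R, ¬ A (σ r) ⊂ A k := by
  obtain ⟨_, hg⟩ := hne
  obtain ⟨σ₀, y₀, h₀, -⟩ := mem_patternSums.1 hg
  obtain ⟨⟨σ, y⟩, h, hmin⟩ := exists_minimalFor_of_wellFoundedLT
    (fun q : (ρ → ι) × (ρ → G) ↦ IsRep A R p H q.1 q.2) (fun q ↦ ∑ r ∈ R, #(A (q.1 r))ᶜ)
    ⟨(σ₀, y₀), h₀⟩
  refine ⟨σ, y, h, fun k hk r hr hlt ↦ ?_⟩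
  have hrep := (h.mono (erase_subset r R)).insert (notMem_erase r R)
    (fun s hs ↦ hk s (mem_of_mem_erase hs)) (hlt.subset (h.mem r hr)) (h.sub_mem r hr)
  rw [insert_erase hr] at hrep
  have hlt_sum : ∑ s ∈ R, #(A (Function.update σ r k s))ᶜ < ∑ s ∈ R, #(A (σ s))ᶜ := by
    refine sum_lt_sum (fun s _ ↦ ?_) ⟨r, hr, ?_⟩
    · obtain rfl | hsr := eq_or_ne s r
      · simpa using card_le_card (compl_subset_compl.2 hlt.subset)
      · rw [Function.update_of_ne hsr]
    · simpa using card_lt_card (compl_ssubset_compl.2 hlt)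
  exact (hmin (j := (_, Function.update y r (y r))) hrep hlt_sum.le).not_gt hlt_sum

variable [Fintype ι]

lemma card_filter_add_min_hitCount_le (hLH : L ≤ H) (h : IsRep A R p H σ y)
    (hσ : ∀ k, (∀ r ∈ R, σ r ≠ k) → ∀ r ∈ R, A k ⊆ A (σ r)) (g : G) :
    #{r ∈ R | g ∈ cosetHull H {p r} \ cosetHull L (A (σ r))} + min #R (hitCount A L g) ≤
      min #R (hitCount A H g) := by
  obtain ⟨S, hS⟩ : ∃ S, S = R.filter fun r ↦ g ∈ cosetHull H {p r} \ cosetHull L (A (σ r)) :=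
    ⟨_, rfl⟩
  have hmemS {r : ρ} : r ∈ S ↔ r ∈ R ∧ g - p r ∈ H ∧ g ∉ cosetHull L (A (σ r)) := by
    rw [hS, mem_filter, mem_sdiff, mem_cosetHull_singleton]
  have hSR : S ⊆ R := hS ▸ filter_subset _ R
  rw [← hS]
  obtain rfl | ⟨r₀, hr₀⟩ := S.eq_empty_or_nonempty
  · rw [card_empty, zero_add]
    exact min_le_min le_rfl (hitCount_mono hLH (fun _ ↦ Subset.rfl) g)
  have hdisj : Disjoint ({k | g ∈ cosetHull L (A k)} : Finset ι) (S.image σ) := by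
    rw [disjoint_right]
    intro k hk hkg
    obtain ⟨r, hr, rfl⟩ := mem_image.1 hk
    exact (hmemS.1 hr).2.2 (mem_filter.1 hkg).2
  have hcard : #(({k | g ∈ cosetHull L (A k)} : Finset ι) ∪ S.image σ) = hitCount A L g + #S := by
    rw [card_union_of_disjoint hdisj, card_image_of_injOn (h.injOn.mono (mod_cast hSR)), hitCount]
  have hle_card : hitCount A L g + #S ≤ #R := by
    rw [← hcard]
    refine (card_le_card (union_subset (fun k hk ↦ ?_) (image_subset_image hSR))).trans
      (card_image_le (f := σ))
    by_contra hkσ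
    have hunused : ∀ r ∈ R, σ r ≠ k := fun r hr hrk ↦ hkσ (hrk ▸ mem_image_of_mem σ hr)
    exact (hmemS.1 hr₀).2.2 (cosetHull_subset_cosetHull le_rfl (hσ k hunused r₀ (hSR hr₀))
      (mem_filter.1 hk).2)
  have hle_hitCount : hitCount A L g + #S ≤ hitCount A H g := by
    rw [← hcard]
    refine card_le_card (union_subset (monotone_filter_right _ fun k _ hk ↦
      cosetHull_subset_cosetHull hLH Subset.rfl hk) (image_subset_iff.2 fun r hr ↦ ?_))
    obtain ⟨hrR, hg, -⟩ := hmemS.1 hr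
    refine mem_filter.2 ⟨mem_univ _, mem_cosetHull.2 ⟨y r, h.mem r hrR, ?_⟩⟩
    simpa using H.sub_mem hg (h.sub_mem r hrR)
  omega

theorem exists_subset_patternSums_of_forall_subset (h : IsRep A R p H σ y)
    (hσ : ∀ k, (∀ r ∈ R, σ r ≠ k) → ∀ r ∈ R, A k ⊆ A (σ r)) :
    ∃ C ⊆ patternSums A R p H, C.Nonempty ∧
      Nat.card H + potential #R A H ≤ #C + potential #R A (stabilizer G C) := by
  obtain ⟨C, hC⟩ : ∃ C, C = ∑ r ∈ R, A (σ r) ∩ cosetHull H {p r} := ⟨_, rfl⟩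
  obtain ⟨N, hN⟩ : ∃ N, N = stabilizer G C := ⟨_, rfl⟩
  have hCD : C ⊆ patternSums A R p H := hC ▸ sum_inter_cosetHull_subset_patternSums h.injOn
  have hW (r : ρ) (hr : r ∈ R) : y r ∈ A (σ r) ∩ cosetHull H {p r} :=
    mem_inter.2 ⟨h.mem r hr, mem_cosetHull_singleton.2 (h.sub_mem r hr)⟩
  have hCne : C.Nonempty := by
    refine ⟨∑ r ∈ R, y r, ?_⟩
    rw [hC, ← mem_coe, coe_sum, Set.mem_finsetSum]
    exact ⟨y, fun hr ↦ hW _ hr, rfl⟩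
  have hNH : N ≤ H :=
    hN ▸ stabilizer_le_of_subset_cosetHull hCne (hCD.trans patternSums_subset_cosetHull)
  refine ⟨C, hCD, hCne, ?_⟩
  have hCN : cosetHull N C = C := cosetHull_eq_self hN.le
  have hkneser := sum_card_cosetHull_add_card_le (N := N) (fun r hr ↦ ⟨y r, hW r hr⟩)
    (by rw [← hC, hCN, hN])
  rw [← hC, hCN] at hkneser
  have hcoset (r : ρ) : Nat.card H = #(cosetHull N (A (σ r) ∩ cosetHull H {p r})) +
      #(cosetHull H {p r} \ cosetHull N (A (σ r))) := by
    rw [cosetHull_inter (hNH.trans (le_stabilizer_cosetHull H _)), inter_comm,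
      card_inter_add_card_sdiff, card_cosetHull_singleton]
  have hcosets : #R * Nat.card H = ∑ r ∈ R, #(cosetHull N (A (σ r) ∩ cosetHull H {p r})) +
      ∑ g, #{r ∈ R | g ∈ cosetHull H {p r} \ cosetHull N (A (σ r))} := by
    have hcount := sum_card_bipartiteAbove_eq_sum_card_bipartiteBelow (s := R) (t := univ)
      fun r g ↦ g ∈ cosetHull H {p r} \ cosetHull N (A (σ r))
    simp only [bipartiteAbove, bipartiteBelow, filter_univ_mem] at hcount
    rw [← hcount, ← sum_add_distrib, ← smul_eq_mul]
    exact (sum_eq_card_nsmul fun r _ ↦ (hcoset r).symm).symm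
  have hcounts := sum_le_sum fun g (_ : g ∈ univ) ↦ card_filter_add_min_hitCount_le hNH h hσ g
  rw [sum_add_distrib] at hcounts
  rw [← hN, potential, potential]
  zify at hkneser hcosets hcounts
  linarith

end Start

section Induction

variable {G : Type*} [AddCommGroup G] [Fintype G] {ι ρ : Type*} [Fintype ι] {A B : ι → Finset G}
  {R : Finset ρ} {p : ρ → G} {H L N : AddSubgroup G}

lemma potential_le_potential {l : ℕ} (hl : 1 ≤ l) (hLN : L ≤ N)
    (h : ∀ g, hitCount B N g ≤ hitCount A L g) : potential l A L ≤ potential l B N := by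
  have hcard := AddSubgroup.card_le_of_le hLN
  unfold potential
  gcongr with g
  · omega
  · exact h g

theorem dgmBound_of_le_stabilizer (hR : R.Nonempty)
    (hIH : ∀ L < H, ∀ (B : ι → Finset G) (S : Finset ρ) q, DGMBound B S q L)
    (hind : ∀ B : ι → Finset G, ∑ k, #(A k) ^ 2 < ∑ k, #(B k) ^ 2 → DGMBound B R p H)
    (hA : ∀ k, stabilizer G (patternSums A R p H) ≤ stabilizer G (A k)) : DGMBound A R p H := by
  intro hne
  have hcard : 1 ≤ #R := hR.card_pos
  obtain ⟨σ, y, h, hmax⟩ := exists_isRep_forall_not_ssubset hne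
  by_cases hσ : ∀ k, (∀ r ∈ R, σ r ≠ k) → ∀ r ∈ R, A k ⊆ A (σ r)
  · obtain ⟨C, hCD, hC, hX⟩ := exists_subset_patternSums_of_forall_subset h hσ
    obtain ⟨L, hL, hXL⟩ := exists_le_stabilizer_of_hasCosetBound patternSums_subset_cosetHull
      (fun L hL c hc x _ _ ↦ by
        obtain ⟨τ, z, hz, rfl⟩ := mem_patternSums.1 hc
        exact hasCosetBound_of_isRep hL.le (hIH L hL _ _ _) hz (by simp) Subset.rfl) hC hCD hX
    refine hXL.trans ?_
    gcongr
    exact potential_le_potential hcard hL fun g ↦ (hitCount_of_le_stabilizer hA hL).ge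
  · push Not at hσ
    obtain ⟨j, hj, r₀, hr₀, hji⟩ := hσ
    have hij : σ r₀ ≠ j := hj r₀ hr₀
    have hB : (patternSums (uncross A (σ r₀) j) R p H).Nonempty :=
      ⟨_, (h.uncross_of_forall_ne_right hij hj).sum_mem_patternSums⟩
    have hX := hind _ (sum_card_sq_lt_sum_card_uncross_sq hij
      (fun hsub ↦ hmax j hj r₀ hr₀ ⟨hsub, hji⟩) hji) hB
    obtain ⟨L, hL, hXL⟩ := exists_le_stabilizer_of_hasCosetBound patternSums_subset_cosetHull
      (fun L hL c hc x hx hxc ↦ hasCosetBound_uncross hij hL.le (hIH L hL) hc hx hxc)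
      hB (patternSums_uncross_subset hij) hX
    have hH := potential_le_potential hcard (le_refl H) fun g ↦ hitCount_uncross_le (A := A) hij H g
    have hN := potential_le_potential hcard hL fun g ↦
      (hitCount_uncross_of_le_stabilizer (g := g) hij hA hL).ge
    linarith

theorem dgmBound (A : ι → Finset G) (R : Finset ρ) (p : ρ → G) (H : AddSubgroup G) :
    DGMBound A R p H := by
  induction H using WellFoundedLT.induction generalizing A R p with | _ H hIH
  obtain rfl | hR := R.eq_empty_or_nonempty
  · exact dgmBound_empty
  obtain ⟨m, hm⟩ : ∃ m, Fintype.card ι * Fintype.card G ^ 2 - ∑ k, #(A k) ^ 2 = m := ⟨_, rfl⟩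
  induction m using Nat.strong_induction_on generalizing A with | _ m hind
  subst hm
  intro hne
  obtain ⟨N, hN⟩ : ∃ N, N = stabilizer G (patternSums A R p H) := ⟨_, rfl⟩
  have hNH : N ≤ H := hN ▸ stabilizer_le_of_subset_cosetHull hne patternSums_subset_cosetHull
  have hsums : patternSums (fun k ↦ cosetHull N (A k)) R p H = patternSums A R p H := by
    rw [patternSums_cosetHull hR hNH, cosetHull_eq_self hN.le]
  have hhull : DGMBound (fun k ↦ cosetHull N (A k)) R p H := by
    refine dgmBound_of_le_stabilizer hR hIH (fun B hB ↦ hind _ ?_ B rfl) fun k ↦ ?_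
    · have hA : ∑ k, #(A k) ^ 2 ≤ ∑ k, #(cosetHull N (A k)) ^ 2 := by
        gcongr with k
        exact subset_cosetHull N (A k)
      have hB' : ∑ k, #(B k) ^ 2 ≤ Fintype.card ι * Fintype.card G ^ 2 := by
        refine (sum_le_card_nsmul univ _ (Fintype.card G ^ 2) fun k _ ↦ ?_).trans_eq (by simp)
        gcongr
        exact card_le_univ _
      omega
    · rw [hsums, ← hN]
      exact le_stabilizer_cosetHull N (A k)
  have hbound := hhull.le_card_cosetHull hNH hne (by rw [cosetHull_eq_self hN.le, hN])
  rwa [cosetHull_eq_self hN.le, hN] at hbound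

end Induction

section SumsOfTerms

variable {G : Type*} [AddCommGroup G] [Fintype G] {ι : Type*}

lemma coe_patternSums_univ_top (n : ℕ) (A : ι → Finset G) :
    (patternSums A (univ : Finset (Fin n)) 0 ⊤ : Set G) =
      {g | ∃ (s : Finset ι) (f : ι → G), #s = n ∧ (∀ i ∈ s, f i ∈ A i) ∧ ∑ i ∈ s, f i = g} := by
  ext g
  rw [mem_coe, mem_patternSums, Set.mem_ofPred_eq]
  constructor
  · rintro ⟨σ, y, h, rfl⟩
    have hσ : Function.Injective σ := by simpa using h.injOn
    refine ⟨univ.image σ, Function.extend σ y 0, by simp [card_image_of_injective _ hσ], ?_, ?_⟩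
    · simpa [hσ.extend_apply] using h.mem
    · simp [sum_image hσ.injOn, hσ.extend_apply]
  · rintro ⟨s, f, hs, hf, rfl⟩
    let e := s.equivFinOfCardEq hs
    refine ⟨fun r ↦ e.symm r, fun r ↦ f (e.symm r), ⟨?_, ?_, by simp⟩, ?_⟩
    · exact (Subtype.val_injective.comp e.symm.injective).injOn
    · exact fun r _ ↦ hf _ (e.symm r).2
    · rw [← sum_coe_sort s f]
      exact e.symm.sum_comp fun i : s ↦ f i

variable [Fintype ι] {A : ι → Finset G}

lemma card_le_hitCount_top {ρ : Type*} {R : Finset ρ} {p y : ρ → G} {H : AddSubgroup G} {σ : ρ → ι}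
    (h : IsRep A R p H σ y) (g : G) : #R ≤ hitCount A ⊤ g := by
  rw [← card_image_of_injOn h.injOn, hitCount]
  refine card_le_card (image_subset_iff.2 fun r hr ↦ ?_)
  simpa [mem_cosetHull] using ⟨y r, h.mem r hr⟩

lemma hitCount_bot (A : ι → Finset G) (g : G) : hitCount A ⊥ g = #{i | g ∈ A i} := by
  simp [hitCount, mem_cosetHull, sub_eq_zero]

lemma sum_hitCount_bot (A : ι → Finset G) : ∑ g, hitCount A ⊥ g = ∑ i, #(A i) := by
  simpa [hitCount_bot, bipartiteAbove, bipartiteBelow] using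
    (sum_card_bipartiteAbove_eq_sum_card_bipartiteBelow (s := univ) (t := univ)
      fun i g ↦ g ∈ A i).symm

lemma potential_top {l : ℕ} (h : ∀ g, l ≤ hitCount A ⊤ g) : potential l A ⊤ = -Nat.card G := by
  have hsum : ∑ g, (min l (hitCount A ⊤ g) : ℤ) = l * Nat.card G := by
    simp [← Nat.cast_min, min_eq_left (h _), mul_comm]
  rw [potential, hsum, AddSubgroup.card_top]
  ring

end SumsOfTerms

end DevosGoddynMohar

open AddAction DevosGoddynMohar
open scoped Pointwise

/-- The Devos–Goddyn–Mohar theorem; its sum over the cosets of the stabilizer is written as a sum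
over the elements of `G`, each coset being counted as often as it has elements. -/
theorem dgm_trivial_stabilizer_general {G : Type*} [AddCommGroup G] [Fintype G] {ι : Type*}
    [Fintype ι] (n : ℕ) (A : ι → Finset G) (T : Set G)
    (hT : T = {g | ∃ (s : Finset ι) (f : ι → G),
      s.card = n ∧ (∀ i ∈ s, f i ∈ A i) ∧ ∑ i ∈ s, f i = g})
    (hne : T.Nonempty) :
    (Nat.card T : ℤ) ≥ (1 - n) * Nat.card (stabilizer G T) +
      ∑ g, (min n (hitCount A (stabilizer G T) g) : ℤ) := by
  classical
  rw [← coe_patternSums_univ_top] at hT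
  subst hT
  obtain ⟨g, hg⟩ := hne
  obtain ⟨σ, y, h, -⟩ := mem_patternSums.1 hg
  have hbound := dgmBound A (Finset.univ : Finset (Fin n)) 0 ⊤ ⟨g, hg⟩
  rw [potential_top (card_le_hitCount_top h), potential, AddSubgroup.card_top, Finset.card_fin]
    at hbound
  rw [stabilizer_coe_finset, Nat.card_coe_set_eq, Set.ncard_coe_finset]
  linarith

/-- DGM with trivial stabilizer: `|Σ_n(A)| ≥ 1 - n + Σ_i |A_i|`; in particular
`|Σ_n(A)| ≤ n - 1` forces `Σ_i |A_i| ≤ 2n - 2`. -/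
theorem dgm_trivial_stabilizer {G : Type*} [AddCommGroup G] [Fintype G] [DecidableEq G]
    (n : ℕ) (hn : n = Fintype.card G)
    (t : ℕ) (ht : n ≤ t) (A : Fin t → Finset G) (hA : ∀ i, (A i).Nonempty)
    (T : Set G)
    (hT : T = {g | ∃ (s : Finset (Fin t)) (f : Fin t → G),
      s.card = n ∧ (∀ i ∈ s, f i ∈ A i) ∧ ∑ i ∈ s, f i = g})
    (hne : T.Nonempty)
    (hstab : ∀ h : G, (h + ·) '' T = T → h = 0)
    (hmult : ∀ a : G, (Finset.univ.filter (fun i => a ∈ A i)).card ≤ n) :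
    ((Nat.card T : ℤ) ≥ 1 - n + ∑ i, ((A i).card : ℤ)) ∧
      (Nat.card T ≤ n - 1 → ∑ i, (A i).card ≤ 2 * n - 2) := by
  have hbot : AddAction.stabilizer G T = ⊥ :=
    (AddSubgroup.eq_bot_iff_forall _).2 fun h hh ↦ hstab h hh
  have hbound := dgm_trivial_stabilizer_general n A T hT hne
  have hcount (g : G) : hitCount A ⊥ g ≤ n := by
    rw [hitCount_bot]
    convert hmult g
  have hpos : 0 < n := hn ▸ Fintype.card_pos
  simp only [hbot, AddSubgroup.card_bot, ← Nat.cast_min, min_eq_right (hcount _)] at hbound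
  rw [← Nat.cast_sum, sum_hitCount_bot] at hbound
  push_cast at hbound
  refine ⟨by linarith, fun hcard ↦ ?_⟩
  zify [hpos] at *
  omega
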